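/- Let g > 0, h > 0 and define ω(k) = √(g·k·tanh(k·h)) for k ≥ 0 and ω(k) = −ω(−k) for k < 0. Then for all integers m ≠ n and all μ ∈ (−1/2, 1/2], if ω(n+μ) − ω(m+μ) = (n−m)·ω(1), then ω(n+μ) = (n+μ)·ω(1) and ω(m+μ) = (m+μ)·ω(1). In other words, any collision of the stability eigenvalues λ_n^{(μ)} = −i(ω(n+μ) − (n+μ)ω(1)) of the zero-amplitude solution of the Whitham equation occurs at the origin. -/

import Mathlib

/-!
Write `F k = ω k - k ω 1`. The hypothesis says `F a = F b` for two wavenumbers `a`, `b` whose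
difference is a nonzero integer, and the claim is that the common value is `0`.

The key fact is that `ω` is strictly concave on `[0, ∞)`. After rescaling this is the strict
concavity of `√p` with `p x = x tanh x`, and it holds because, with `t = tanh x` and `s = 1 - t²`,
`2 p p'' - p'² = -(t - x s)² - 4 x² s t² < 0`. (`p` itself is not concave.)

So `F` is odd, strictly concave on `[0, ∞)`, and vanishes at `0` and `1`; hence it is positive on
`(0, 1)` and strictly decreasing and nonpositive on `[1, ∞)`. If `a > b` have the same weak sign,
then, up to the symmetry `(a, b) ↦ (-b, -a)`, `a ≥ b + 1 ≥ 1` forces `F b ≤ 0`, so `b = 0` or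
`b ≥ 1`, and the latter contradicts monotonicity. If `a > 0 > b = -c`, then `F a + F c = 0` with
`a + c` a positive integer. If `a = c` then `F a = 0` at once. Otherwise the sum `1` is impossible as `F` is
positive on `(0, 1)`, and a sum of at least `2` is impossible since strict concavity gives
`F a + F c < 2 F ((a + c) / 2) ≤ 0` (`whitham_eq_zero_of_collision`).
-/

open Set

theorem whitham_hasDerivAt_tanh (x : ℝ) : HasDerivAt Real.tanh (1 - Real.tanh x ^ 2) x := by
  have hc := (Real.cosh_pos x).ne'
  have h := (Real.hasDerivAt_sinh x).div (Real.hasDerivAt_cosh x) hc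
  have e : Real.tanh = Real.sinh / Real.cosh := by
    funext y
    simp [Real.tanh_eq_sinh_div_cosh]
  rw [e]
  refine h.congr_deriv ?_
  simp only [Pi.div_apply]
  field_simp

theorem whitham_tanh_pos {x : ℝ} (hx : 0 < x) : 0 < Real.tanh x := by
  rw [Real.tanh_eq_sinh_div_cosh]
  exact div_pos (Real.sinh_pos_iff.2 hx) (Real.cosh_pos x)

/-- The normalized dispersion relation (`g = h = 1`) is strictly concave on the half-line: its
second derivative has the sign of `2 p p'' - p'²` with `p x = x tanh x`. -/
theorem whitham_strictConcaveOn_sqrt :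
    StrictConcaveOn ℝ (Ici 0) (fun x : ℝ => √(x * Real.tanh x)) := by
  have htc : Continuous Real.tanh :=
    continuous_iff_continuousAt.2 fun x => (whitham_hasDerivAt_tanh x).continuousAt
  have hp : ∀ x : ℝ, HasDerivAt (fun x => x * Real.tanh x)
      (Real.tanh x + x * (1 - Real.tanh x ^ 2)) x := fun x =>
    ((hasDerivAt_id' x).mul (whitham_hasDerivAt_tanh x)).congr_deriv (by ring)
  have hpos : ∀ x : ℝ, 0 < x → 0 < x * Real.tanh x := fun x hx =>
    mul_pos hx (whitham_tanh_pos hx)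
  have hφ : ∀ x : ℝ, 0 < x → HasDerivAt (fun x : ℝ => √(x * Real.tanh x))
      ((Real.tanh x + x * (1 - Real.tanh x ^ 2)) / (2 * √(x * Real.tanh x))) x := fun x hx =>
    (hp x).sqrt (hpos x hx).ne'
  have hN : ∀ x : ℝ, HasDerivAt (fun x => Real.tanh x + x * (1 - Real.tanh x ^ 2))
      (2 * (1 - Real.tanh x ^ 2) - 2 * x * Real.tanh x * (1 - Real.tanh x ^ 2)) x := fun x => by
    have ht := whitham_hasDerivAt_tanh x
    exact (ht.add ((hasDerivAt_id' x).mul ((ht.pow 2).const_sub 1))).congr_deriv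
      (by push_cast; simp; ring)
  refine StrictAntiOn.strictConcaveOn_of_deriv (convex_Ici 0)
    (by fun_prop) ?_
  rw [interior_Ici]
  have key : StrictAntiOn
      (fun x => (Real.tanh x + x * (1 - Real.tanh x ^ 2)) / (2 * √(x * Real.tanh x)))
      (Ioi (0 : ℝ)) := by
    have hD : ∀ x : ℝ, 0 < x → HasDerivAt
        (fun x => (Real.tanh x + x * (1 - Real.tanh x ^ 2)) / (2 * √(x * Real.tanh x))) _ x :=
      fun x hx => (hN x).div ((hφ x hx).const_mul 2)
        (mul_pos two_pos (Real.sqrt_pos.2 (hpos x hx))).ne'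
    refine strictAntiOn_of_deriv_neg (convex_Ioi 0)
      (fun x hx => (hD x hx).continuousAt.continuousWithinAt) ?_
    intro x hx
    rw [interior_Ioi] at hx
    have hx' : 0 < x := hx
    rw [(hD x hx').deriv]
    have ht := whitham_tanh_pos hx'
    have ht1 := Real.tanh_sq_lt_one x
    have hr : 0 < √(x * Real.tanh x) := Real.sqrt_pos.2 (hpos x hx')
    have hr2 : √(x * Real.tanh x) ^ 2 = x * Real.tanh x := Real.sq_sqrt (hpos x hx').le
    generalize √(x * Real.tanh x) = r at hr hr2 ⊢
    generalize Real.tanh x = t at ht ht1 hr2 ⊢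
    refine div_neg_of_neg_of_pos ?_ (by positivity)
    have e : (2 * (1 - t ^ 2) - 2 * x * t * (1 - t ^ 2)) * (2 * r) -
        (t + x * (1 - t ^ 2)) * (2 * ((t + x * (1 - t ^ 2)) / (2 * r))) =
        -((t - x * (1 - t ^ 2)) ^ 2 + 4 * x ^ 2 * (1 - t ^ 2) * t ^ 2) / r := by
      field_simp
      rw [hr2]
      ring
    rw [e]
    have hs : 0 < 1 - t ^ 2 := by linarith
    exact div_neg_of_neg_of_pos (neg_lt_zero.2 (by positivity)) hr
  exact key.congr fun x hx => (hφ x hx).deriv.symm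

/-- Strict concavity for general `g`, `h`, by the scaling
`√(g k tanh (k h)) = √(g / h) √(x tanh x)` with `x = k h`; subtracting the linear term `k c`
does not affect it. -/
theorem whitham_strictConcaveOn (g h c : ℝ) (hg : 0 < g) (hh : 0 < h) :
    StrictConcaveOn ℝ (Ici 0) (fun k : ℝ => √(g * k * Real.tanh (k * h)) - k * c) := by
  have hs : ∀ k : ℝ, √(g * k * Real.tanh (k * h)) =
      √(g / h) * √((k * h) * Real.tanh (k * h)) := fun k => by
    rw [← Real.sqrt_mul (by positivity)]
    congr 1
    field_simp
  have hC : 0 < √(g / h) := Real.sqrt_pos.2 (by positivity)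
  refine ⟨convex_Ici 0, fun x hx y hy hxy a b ha hb hab => ?_⟩
  have hne : x * h ≠ y * h := fun e => hxy (mul_right_cancel₀ hh.ne' e)
  have := whitham_strictConcaveOn_sqrt.2 (mem_Ici.2 (mul_nonneg hx hh.le))
    (mem_Ici.2 (mul_nonneg hy hh.le)) hne ha hb hab
  have e : a * (x * h) + b * (y * h) = (a * x + b * y) * h := by ring
  simp only [smul_eq_mul, hs, e] at this ⊢
  nlinarith [mul_lt_mul_of_pos_left this hC]

/-- An odd function, strictly concave on the half-line and vanishing at `1`, can take the same
value at two points a positive integer apart only if that value is `0`. -/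
theorem whitham_eq_zero_of_collision {F : ℝ → ℝ} (hF : StrictConcaveOn ℝ (Ici 0) F)
    (hodd : ∀ x, F (-x) = -F x) (h1 : F 1 = 0) {a b : ℝ} {N : ℤ} (hN : 0 < N)
    (hab : a - b = N) (h : F a = F b) : F a = 0 := by
  have h0 : F 0 = 0 := by
    have := hodd 0
    rw [neg_zero] at this
    linarith
  have hpos : ∀ x, 0 < x → x < 1 → 0 < F x := fun x hx hx1 => by
    have := hF.2 (mem_Ici.2 le_rfl) (mem_Ici.2 zero_le_one) zero_ne_one
      (sub_pos.2 hx1) hx (by ring)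
    simpa [h0, h1] using this
  have hstep : ∀ x y, 0 < x → x < y → F x ≤ 0 → F y < F x := fun x y hx hxy hFx => by
    have := hF.slope_anti_adjacent (mem_Ici.2 le_rfl) (mem_Ici.2 (hx.trans hxy).le) hx hxy
    rw [h0, sub_zero, sub_zero] at this
    have h2 := this.trans_le (div_nonpos_of_nonpos_of_nonneg hFx hx.le)
    have := (div_lt_iff₀ (sub_pos.2 hxy)).1 h2
    linarith
  have hneg : ∀ x, 1 < x → F x < 0 := fun x hx => by
    have := hstep 1 x one_pos hx h1.le
    linarith
  have hnp : ∀ x, 1 ≤ x → F x ≤ 0 := fun x hx => by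
    rcases hx.eq_or_lt with rfl | hx
    · exact h1.le
    · exact (hneg x hx).le
  have hN1 : (1 : ℝ) ≤ N := by exact_mod_cast hN
  -- Both points on the nonnegative side; oddness transfers this to the nonpositive side.
  have same : ∀ u v, 0 ≤ v → v + 1 ≤ u → F u = F v → F u = 0 := fun u v hv huv e => by
    rcases hv.eq_or_lt with rfl | hv
    · rw [e, h0]
    · have hu := hnp u (by linarith)
      have := hstep v u hv (by linarith) (by linarith)
      linarith
  rcases le_or_gt 0 b with hb | hb
  · exact same a b hb (by linarith) h
  rcases le_or_gt a 0 with ha | ha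
  · have := same (-b) (-a) (by linarith) (by linarith) (by rw [hodd, hodd, h])
    rw [hodd] at this
    linarith
  obtain ⟨c, rfl⟩ : ∃ c, b = -c := ⟨-b, by ring⟩
  rw [hodd] at h
  have hc : 0 < c := by linarith
  have hmid : a ≠ c → F a + F c < 2 * F ((a + c) / 2) := fun hne => by
    have := hF.2 (mem_Ici.2 ha.le) (mem_Ici.2 hc.le) hne
      (show (0 : ℝ) < 1 / 2 by norm_num) (show (0 : ℝ) < 1 / 2 by norm_num) (by norm_num)
    simp only [smul_eq_mul] at this
    rw [show (1 / 2 : ℝ) * a + 1 / 2 * c = (a + c) / 2 by ring] at this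
    linarith
  have hsum : a + c = N := by linarith
  by_cases hac : a = c
  · subst hac
    linarith
  · rcases (show N = 1 ∨ 2 ≤ N by omega) with rfl | hN2
    · push_cast at hsum
      have := hpos a ha (by linarith)
      have := hpos c hc (by linarith)
      linarith
    · have hN2 : (2 : ℝ) ≤ N := by exact_mod_cast hN2
      have := hmid hac
      have := hnp ((a + c) / 2) (by linarith)
      linarith

/-- All eigenvalue collisions for the zero-amplitude solution of the Whitham equation
occur at the origin: if `ω(n+μ) - ω(m+μ) = (n-m) ω(1)` with
`ω(k) = sign(k)√(g k tanh(k h))`, then both eigenvalues vanish. -/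
theorem whitham_collisions_at_origin (g h : ℝ) (hg : 0 < g) (hh : 0 < h)
    (ω : ℝ → ℝ)
    (hω : ∀ k : ℝ, 0 ≤ k → ω k = Real.sqrt (g * k * Real.tanh (k * h)))
    (hodd : ∀ k : ℝ, k < 0 → ω k = -ω (-k)) :
    ∀ m n : ℤ, m ≠ n → ∀ μ : ℝ, -(1/2) < μ → μ ≤ 1/2 →
      ω ((n : ℝ) + μ) - ω ((m : ℝ) + μ) = ((n : ℝ) - (m : ℝ)) * ω 1 →
      ω ((n : ℝ) + μ) = ((n : ℝ) + μ) * ω 1 ∧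
        ω ((m : ℝ) + μ) = ((m : ℝ) + μ) * ω 1 := by
  have h0 : ω 0 = 0 := by simp [hω 0 le_rfl]
  have hodd' : ∀ k, ω (-k) = -ω k := fun k => by
    rcases lt_trichotomy k 0 with hk | rfl | hk
    · rw [hodd k hk, neg_neg]
    · simp [h0]
    · rw [hodd (-k) (by linarith), neg_neg]
  have hF : StrictConcaveOn ℝ (Ici 0) (fun k => ω k - k * ω 1) :=
    (whitham_strictConcaveOn g h (ω 1) hg hh).congr fun k hk => by
      simp only [hω k hk]
  have hFodd : ∀ k, (fun k => ω k - k * ω 1) (-k) = -(fun k => ω k - k * ω 1) k := fun k => by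
    simp only [hodd']
    ring
  intro m n hmn μ _ _ hcol
  have hEq : ω (n + μ) - (n + μ) * ω 1 = ω (m + μ) - (m + μ) * ω 1 := by linarith
  have hzero : ω (n + μ) - (n + μ) * ω 1 = 0 := by
    rcases lt_or_gt_of_ne hmn with hlt | hlt
    · exact whitham_eq_zero_of_collision hF hFodd (by simp) (sub_pos.2 hlt)
        (by push_cast; ring) hEq
    · rw [hEq]
      exact whitham_eq_zero_of_collision hF hFodd (by simp) (sub_pos.2 hlt)
        (by push_cast; ring) hEq.symm
  constructor <;> linarith
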